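/- Assume the feature vectors {φ(y)}_{y∈Y} are orthonormal, the ground truth reward r_G satisfies the reward structure assumption, and the initial parameters θ_0 satisfy the initial policy assumption (orthonormal case). Let r_P be identical to r_G except that r_P(y_med) = min_{y∈Y_bad} r_G(y), and let ε ∈ (0, Δ1). If θ_t is the gradient flow maximizing V_P, then for every t ≥ T := (r_G(y_⋆) + 1)² / (ε² (r_P(y_⋆) − V_P(θ_0))) · π_{θ_0}(y_⋆)^{−1}, it holds that V_G(θ_t) ≥ r_G(y_⋆) − ε and π_{θ_t}(y_⋆) ≥ 1 − ε/(Δ1 + Δ2). -/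

import Mathlib

open scoped BigOperators RealInnerProductSpace

noncomputable def policy {Y : Type*} [Fintype Y] {D : ℕ}
    (φ : Y → EuclideanSpace ℝ (Fin D)) (θ : EuclideanSpace ℝ (Fin D)) (y : Y) : ℝ :=
  Real.exp ⟪φ y, θ⟫ / ∑ z, Real.exp ⟪φ z, θ⟫

noncomputable def expReward {Y : Type*} [Fintype Y] {D : ℕ}
    (φ : Y → EuclideanSpace ℝ (Fin D)) (r : Y → ℝ) (θ : EuclideanSpace ℝ (Fin D)) : ℝ :=
  ∑ y, policy φ θ y * r y

/-!
Let `π⋆(t)` be the probability of the optimal output. The proxy reward takes a single value `b` on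
all the other outputs, so `V_P = b + Δ π⋆` with `Δ = r_G(y⋆) - b`, and the gradient flow of `V_P`
is a time-changed gradient flow of `π⋆`: `π⋆' = Δ ‖∇π⋆‖²`. The component of `∇π⋆` along `φ(y⋆)`
is `π⋆ (1 - π⋆)`, whence `π⋆' ≥ Δ (π⋆ (1 - π⋆))²`, that is, `(1 / π⋆)' ≤ -Δ (1 - π⋆)²`. As long as
`π⋆ < 1 - ε / Δ`, the positive quantity `1 / π⋆` decreases at speed at least `ε² / Δ`, which is
possible for a time less than `Δ / (ε² π⋆(0))` only. This is at most the time `T` of the theorem.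
-/

section DifferentialInequality

variable {p p' : ℝ → ℝ} {c : ℝ}

lemma monotoneOn_Ici_of_mul_sq_le_deriv (hp : ∀ t, 0 ≤ t → HasDerivAt p (p' t) t) (hc : 0 ≤ c)
    (hp' : ∀ t, 0 ≤ t → c * (p t * (1 - p t)) ^ 2 ≤ p' t) : MonotoneOn p (Set.Ici 0) :=
  monotoneOn_of_hasDerivWithinAt_nonneg (convex_Ici 0)
    (fun t ht ↦ (hp t ht).continuousAt.continuousWithinAt)
    (fun t ht ↦ (hp t (interior_subset ht)).hasDerivWithinAt)
    fun t ht ↦ le_trans (by positivity) (hp' t (interior_subset ht))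

lemma one_sub_le_of_mul_sq_le_deriv (hp : ∀ t, 0 ≤ t → HasDerivAt p (p' t) t) (hc : 0 < c)
    (hp' : ∀ t, 0 ≤ t → c * (p t * (1 - p t)) ^ 2 ≤ p' t) (hp₀ : 0 < p 0)
    {δ : ℝ} (hδ : 0 < δ) {t : ℝ} (ht : (c * δ ^ 2)⁻¹ * (p 0)⁻¹ ≤ t) : 1 - δ ≤ p t := by
  have ht₀ : 0 ≤ t := le_trans (by positivity) ht
  have hmono := monotoneOn_Ici_of_mul_sq_le_deriv hp hc.le hp'
  have hpos : ∀ s, 0 ≤ s → 0 < p s := fun s hs ↦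
    hp₀.trans_le (hmono Set.self_mem_Ici hs hs)
  have hinv : ∀ s, 0 ≤ s → HasDerivAt (fun s ↦ (p s)⁻¹) (-p' s / p s ^ 2) s := fun s hs ↦
    (hp s hs).fun_inv (hpos s hs).ne'
  by_contra! hlt
  have hrate : ∀ s ∈ interior (Set.Icc 0 t), deriv (fun s ↦ (p s)⁻¹) s ≤ -(c * δ ^ 2) := by
    intro s hs
    obtain ⟨hs₀, hst⟩ := interior_subset hs
    have hgap : δ ≤ 1 - p s := by linarith [hmono hs₀ ht₀ hst]
    rw [(hinv s hs₀).deriv, div_le_iff₀ (pow_pos (hpos s hs₀) 2), neg_mul, neg_le_neg_iff]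
    calc c * δ ^ 2 * p s ^ 2 ≤ c * (1 - p s) ^ 2 * p s ^ 2 := by gcongr
      _ = c * (p s * (1 - p s)) ^ 2 := by ring
      _ ≤ p' s := hp' s hs₀
  have hdecay : (p t)⁻¹ - (p 0)⁻¹ ≤ -(c * δ ^ 2) * (t - 0) :=
    (convex_Icc 0 t).image_sub_le_mul_sub_of_deriv_le
      (fun s hs ↦ (hinv s hs.1).continuousAt.continuousWithinAt)
      (fun s hs ↦ (hinv s (interior_subset hs).1).differentiableAt.differentiableWithinAt)
      hrate 0 ⟨le_rfl, ht₀⟩ t ⟨ht₀, le_rfl⟩ ht₀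
  have hexhausted : (p 0)⁻¹ ≤ c * δ ^ 2 * t := (inv_mul_le_iff₀ (by positivity)).1 ht
  linarith [inv_pos.2 (hpos t ht₀)]

end DifferentialInequality

section Policy

variable {Y : Type*} [Fintype Y] {D : ℕ} (φ : Y → EuclideanSpace ℝ (Fin D))
  (θ : EuclideanSpace ℝ (Fin D))

lemma sum_exp_pos [Nonempty Y] : 0 < ∑ z, Real.exp ⟪φ z, θ⟫ :=
  Finset.sum_pos (fun _ _ ↦ Real.exp_pos _) Finset.univ_nonempty

lemma policy_pos (y : Y) : 0 < policy φ θ y :=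
  have : Nonempty Y := ⟨y⟩
  div_pos (Real.exp_pos _) (sum_exp_pos φ θ)

lemma sum_policy [Nonempty Y] : ∑ y, policy φ θ y = 1 := by
  simp only [policy, ← Finset.sum_div, div_self (sum_exp_pos φ θ).ne']

lemma policy_le_one (y : Y) : policy φ θ y ≤ 1 := by
  have : Nonempty Y := ⟨y⟩
  rw [← sum_policy φ θ]
  exact Finset.single_le_sum (fun z _ ↦ (policy_pos φ θ z).le) (Finset.mem_univ y)

lemma policy_lt_one [Nontrivial Y] (y : Y) : policy φ θ y < 1 := by
  obtain ⟨z, hz⟩ := exists_ne y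
  rw [← sum_policy φ θ]
  exact Finset.single_lt_sum hz (Finset.mem_univ y) (Finset.mem_univ z) (policy_pos φ θ z)
    fun x _ _ ↦ (policy_pos φ θ x).le

lemma hasGradientAt_log_sum_exp [Nonempty Y] :
    HasGradientAt (fun θ ↦ Real.log (∑ z, Real.exp ⟪φ z, θ⟫)) (∑ z, policy φ θ z • φ z) θ := by
  have hexp : ∀ z, HasFDerivAt (fun θ ↦ Real.exp ⟪φ z, θ⟫)
      (Real.exp ⟪φ z, θ⟫ • innerSL ℝ (φ z)) θ := fun z ↦ (innerSL ℝ (φ z)).hasFDerivAt.exp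
  rw [hasGradientAt_iff_hasFDerivAt]
  refine ((HasFDerivAt.fun_sum fun z _ ↦ hexp z).log (sum_exp_pos φ θ).ne').congr_fderiv ?_
  ext v
  simp [policy, Finset.mul_sum, inv_mul_eq_div, div_mul_eq_mul_div]

lemma policy_eq_exp_sub_log [Nonempty Y] (y : Y) :
    policy φ θ y = Real.exp (⟪φ y, θ⟫ - Real.log (∑ z, Real.exp ⟪φ z, θ⟫)) := by
  rw [Real.exp_sub, Real.exp_log (sum_exp_pos φ θ), policy]

lemma hasGradientAt_policy (y : Y) :
    HasGradientAt (fun θ ↦ policy φ θ y)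
      (policy φ θ y • (φ y - ∑ z, policy φ θ z • φ z)) θ := by
  have : Nonempty Y := ⟨y⟩
  have hlog := (hasGradientAt_log_sum_exp φ θ).hasFDerivAt
  have hexp := ((innerSL ℝ (φ y)).hasFDerivAt.fun_sub hlog).exp
  rw [hasGradientAt_iff_hasFDerivAt, funext fun θ ↦ policy_eq_exp_sub_log φ θ y]
  refine hexp.congr_fderiv ?_
  ext v
  simp [policy_eq_exp_sub_log φ θ y]

lemma expReward_sub [Nonempty Y] (r : Y → ℝ) (b : ℝ) :
    expReward φ r θ - b = ∑ y, policy φ θ y * (r y - b) := by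
  simp only [expReward, mul_sub, Finset.sum_sub_distrib, ← Finset.sum_mul, sum_policy, one_mul]

variable {r : Y → ℝ} {b : ℝ} {y : Y}

lemma add_mul_policy_le_expReward (hr : ∀ z, b ≤ r z) :
    b + (r y - b) * policy φ θ y ≤ expReward φ r θ := by
  have : Nonempty Y := ⟨y⟩
  have hterm : policy φ θ y * (r y - b) ≤ expReward φ r θ - b := by
    rw [expReward_sub]
    exact Finset.single_le_sum (f := fun z ↦ policy φ θ z * (r z - b))
      (fun z _ ↦ mul_nonneg (policy_pos φ θ z).le (sub_nonneg.2 (hr z))) (Finset.mem_univ y)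
  linarith

lemma expReward_eq_add_mul_policy (hr : ∀ z, z ≠ y → r z = b) :
    expReward φ r θ = b + (r y - b) * policy φ θ y := by
  have : Nonempty Y := ⟨y⟩
  rw [← sub_eq_iff_eq_add', expReward_sub, Fintype.sum_eq_single y fun z hz ↦ by simp [hr z hz],
    mul_comm]

lemma gap_div_sq_le_sq_div [Nontrivial Y] (hr : ∀ z, z ≠ y → r z = b) (hb : b < r y)
    {m : ℝ} (hm : r y - b ≤ m) {ε : ℝ} (hε : 0 < ε) :
    (r y - b) / ε ^ 2 ≤ m ^ 2 / (ε ^ 2 * (r y - expReward φ r θ)) := by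
  have hgap : 0 < r y - b := sub_pos.2 hb
  have hvalue : r y - expReward φ r θ = (r y - b) * (1 - policy φ θ y) := by
    rw [expReward_eq_add_mul_policy φ θ hr]
    ring
  have hpolicy : 0 < 1 - policy φ θ y := sub_pos.2 (policy_lt_one φ θ y)
  rw [hvalue, div_le_div_iff₀ (pow_pos hε 2) (mul_pos (pow_pos hε 2) (mul_pos hgap hpolicy))]
  calc (r y - b) * (ε ^ 2 * ((r y - b) * (1 - policy φ θ y)))
      = (r y - b) ^ 2 * ε ^ 2 * (1 - policy φ θ y) := by ring
    _ ≤ (r y - b) ^ 2 * ε ^ 2 :=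
        mul_le_of_le_one_right (by positivity) (by linarith [policy_pos φ θ y])
    _ ≤ m ^ 2 * ε ^ 2 := by gcongr

lemma gradient_expReward_eq_smul (hr : ∀ z, z ≠ y → r z = b) :
    gradient (expReward φ r) θ = (r y - b) • gradient (fun θ ↦ policy φ θ y) θ := by
  have hpolicy := (hasGradientAt_policy φ θ y).differentiableAt
  have hfun : expReward φ r = fun θ ↦ b + (r y - b) * policy φ θ y :=
    funext fun θ ↦ expReward_eq_add_mul_policy φ θ hr
  rw [gradient, gradient, hfun, fderiv_const_add, fderiv_const_mul hpolicy, map_smul]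

lemma policy_mul_one_sub_policy_le_norm_gradient (hy : ‖φ y‖ = 1)
    (hinner : ∀ z, z ≠ y → ⟪φ y, φ z⟫ ≤ 0) :
    policy φ θ y * (1 - policy φ θ y) ≤ ‖gradient (fun θ ↦ policy φ θ y) θ‖ := by
  classical
  have hmean : ⟪φ y, ∑ z, policy φ θ z • φ z⟫ ≤ policy φ θ y := by
    simp only [inner_sum, inner_smul_right]
    rw [← Finset.add_sum_erase _ _ (Finset.mem_univ y), real_inner_self_eq_norm_sq, hy, one_pow,
      mul_one]
    exact add_le_of_nonpos_right <| Finset.sum_nonpos fun z hz ↦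
      mul_nonpos_of_nonneg_of_nonpos (policy_pos φ θ z).le (hinner z (Finset.ne_of_mem_erase hz))
  calc policy φ θ y * (1 - policy φ θ y)
      ≤ policy φ θ y * ⟪φ y, φ y - ∑ z, policy φ θ z • φ z⟫ := by
        rw [inner_sub_right, real_inner_self_eq_norm_sq, hy, one_pow]
        gcongr
        exact (policy_pos φ θ y).le
    _ = ⟪φ y, gradient (fun θ ↦ policy φ θ y) θ⟫ := by
        rw [(hasGradientAt_policy φ θ y).gradient, inner_smul_right]
    _ ≤ ‖φ y‖ * ‖gradient (fun θ ↦ policy φ θ y) θ‖ := real_inner_le_norm _ _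
    _ = ‖gradient (fun θ ↦ policy φ θ y) θ‖ := by rw [hy, one_mul]

end Policy

section GradientFlow

variable {Y : Type*} [Fintype Y] {D : ℕ} {φ : Y → EuclideanSpace ℝ (Fin D)}
  {θt : ℝ → EuclideanSpace ℝ (Fin D)} {r : Y → ℝ} {b : ℝ} {y : Y}

lemma hasDerivAt_policy_gradientFlow (hr : ∀ z, z ≠ y → r z = b) {t : ℝ}
    (hflow : HasDerivAt θt (gradient (expReward φ r) (θt t)) t) :
    HasDerivAt (fun t ↦ policy φ (θt t) y)
      ((r y - b) * ‖gradient (fun θ ↦ policy φ θ y) (θt t)‖ ^ 2) t := by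
  have hpolicy := (hasGradientAt_policy φ (θt t) y).differentiableAt
  have hchain := hpolicy.hasFDerivAt.comp_hasDerivAt t hflow
  rwa [← inner_gradient_left, gradient_expReward_eq_smul φ (θt t) hr, inner_smul_right,
    real_inner_self_eq_norm_sq] at hchain

lemma one_sub_div_le_policy_gradientFlow (hy : ‖φ y‖ = 1) (hinner : ∀ z, z ≠ y → ⟪φ y, φ z⟫ ≤ 0)
    (hr : ∀ z, z ≠ y → r z = b) (hb : b < r y)
    (hflow : ∀ t, 0 ≤ t → HasDerivAt θt (gradient (expReward φ r) (θt t)) t)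
    {ε : ℝ} (hε : 0 < ε) {t : ℝ} (ht : (r y - b) / ε ^ 2 * (policy φ (θt 0) y)⁻¹ ≤ t) :
    1 - ε / (r y - b) ≤ policy φ (θt t) y := by
  have hgap : 0 < r y - b := sub_pos.2 hb
  have htime : ((r y - b) * (ε / (r y - b)) ^ 2)⁻¹ = (r y - b) / ε ^ 2 := by field_simp
  refine one_sub_le_of_mul_sq_le_deriv
    (fun s hs ↦ hasDerivAt_policy_gradientFlow hr (hflow s hs)) hgap (fun s _ ↦ ?_)
    (policy_pos φ (θt 0) y) (div_pos hε hgap) (htime ▸ ht)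
  gcongr
  · exact mul_nonneg (policy_pos φ (θt s) y).le (sub_nonneg.2 (policy_le_one φ (θt s) y))
  · exact policy_mul_one_sub_policy_le_norm_gradient φ (θt s) hy hinner

end GradientFlow

lemma proxyReward_eq_bad {Y : Type*} {rG rP : Y → ℝ} {ystar ymed ybad : Y} {Ybad : Finset Y}
    (hybad : ybad ∈ Ybad) (hcover : ∀ y, y = ystar ∨ y = ymed ∨ y ∈ Ybad)
    (hrG : ∀ y ∈ Ybad, rG y = rG ybad) (hrP : ∀ y, y ≠ ymed → rP y = rG y)
    (hmed : rP ymed = Ybad.inf' ⟨ybad, hybad⟩ rG) (y : Y) (hy : y ≠ ystar) :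
    rP y = rG ybad := by
  by_cases hym : y = ymed
  · rw [hym, hmed]
    exact le_antisymm (Finset.inf'_le _ hybad) (Finset.le_inf' _ _ fun z hz ↦ (hrG z hz).ge)
  · rw [hrP y hym, hrG y (((hcover y).resolve_left hy).resolve_left hym)]

theorem fast_opt_orthonormal_general {Y : Type*} [Fintype Y] {D : ℕ}
    (φ : Y → EuclideanSpace ℝ (Fin D)) (ystar : Y) (hnorm : ‖φ ystar‖ = 1)
    (hinner : ∀ y, y ≠ ystar → ⟪φ ystar, φ y⟫ ≤ 0)
    (rG rP : Y → ℝ) (b : ℝ) (hb : b < rG ystar) (hrG : ∀ y, b ≤ rG y)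
    (hrP : ∀ y, y ≠ ystar → rP y = b) (hstar : rP ystar = rG ystar)
    (Δ : ℝ) (hΔ : Δ = rG ystar - b)
    (θt : ℝ → EuclideanSpace ℝ (Fin D))
    (hflow : ∀ t, 0 ≤ t → HasDerivAt θt (gradient (expReward φ rP) (θt t)) t)
    (ε : ℝ) (hε : 0 < ε) (t : ℝ) (ht : Δ / ε ^ 2 * (policy φ (θt 0) ystar)⁻¹ ≤ t) :
    rG ystar - ε ≤ expReward φ rG (θt t) ∧ 1 - ε / Δ ≤ policy φ (θt t) ystar := by
  have hΔ₀ : 0 < Δ := hΔ ▸ sub_pos.2 hb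
  rw [← hstar] at hΔ hb
  have hpolicy : 1 - ε / Δ ≤ policy φ (θt t) ystar := by
    subst hΔ
    exact one_sub_div_le_policy_gradientFlow hnorm hinner hrP hb hflow hε ht
  refine ⟨?_, hpolicy⟩
  calc rG ystar - ε = b + (rG ystar - b) * (1 - ε / Δ) := by
        rw [← hstar, ← hΔ, mul_one_sub, mul_div_cancel₀ _ hΔ₀.ne', hΔ]
        ring
    _ ≤ b + (rG ystar - b) * policy φ (θt t) ystar := by
        gcongr
        exact sub_nonneg.2 (hrG ystar)
    _ ≤ expReward φ rG (θt t) := add_mul_policy_le_expReward φ (θt t) hrG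

theorem fast_opt_orthonormal {Y : Type*} [Fintype Y] {D : ℕ}
    (φ : Y → EuclideanSpace ℝ (Fin D)) (hφ : ∀ y, φ y ≠ 0)
    (horth : Orthonormal ℝ φ)
    (rG : Y → ℝ) (hrG : ∀ y, rG y ∈ Set.Icc (-1 : ℝ) 1)
    (ystar ymed ybad : Y) (Ybad : Finset Y) (hybad : ybad ∈ Ybad)
    (hsm : ystar ≠ ymed) (hsb : ystar ∉ Ybad) (hmb : ymed ∉ Ybad)
    (hcover : ∀ y : Y, y = ystar ∨ y = ymed ∨ y ∈ Ybad)
    (hr1 : rG ymed < rG ystar) (hr2 : 0 < rG ymed)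
    (hr3 : ∀ y ∈ Ybad, rG y ≤ 0)
    (hr4 : ∀ y ∈ Ybad, rG y = rG ybad)
    (Δ1 Δ2 : ℝ) (hΔ1 : Δ1 = rG ystar - rG ymed) (hΔ2 : Δ2 = rG ymed - rG ybad)
    (rP : Y → ℝ) (hrP : ∀ y, rP y ∈ Set.Icc (-1 : ℝ) 1)
    (hrPeq : ∀ y : Y, y ≠ ymed → rP y = rG y)
    (hrPmed : rP ymed = Finset.inf' Ybad ⟨ybad, hybad⟩ rG)
    (θt : ℝ → EuclideanSpace ℝ (Fin D))
    (hflow : ∀ t : ℝ, 0 ≤ t → HasDerivAt θt (gradient (expReward φ rP) (θt t)) t)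
    (M : ℝ) (hM : M = min 1 (0.05 * rG ymed ^ ((2:ℝ)/7) / (Δ1 + Δ2)))
    (hinit1 : policy φ (θt 0) ystar
        < M * (min 0.01 (min ((21 / (1100 * (Δ1 + Δ2))) ^ ((7:ℝ)/3)) (Δ2 ^ 2))) ^ ((13:ℝ)/14))
    (hinit2 : max (2 * policy φ (θt 0) ystar ^ ((7:ℝ)/13) / (Δ2 * M ^ ((7:ℝ)/13)))
        (0.05 * rG ymed) ≤ ∑ y ∈ Ybad, policy φ (θt 0) y)
    (hinit3 : ∑ y ∈ Ybad, policy φ (θt 0) y ≤ 0.1 * rG ymed)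
    (ε : ℝ) (hε : ε ∈ Set.Ioo 0 Δ1) :
    ∀ t : ℝ,
      (rG ystar + 1) ^ 2 / (ε ^ 2 * (rP ystar - expReward φ rP (θt 0)))
          * (policy φ (θt 0) ystar)⁻¹ ≤ t →
        rG ystar - ε ≤ expReward φ rG (θt t)
          ∧ 1 - ε / (Δ1 + Δ2) ≤ policy φ (θt t) ystar := by
  have : Nontrivial Y := ⟨ystar, ymed, hsm⟩
  have hstar : rP ystar = rG ystar := hrPeq ystar hsm
  have hbad : rG ybad ≤ 0 := hr3 ybad hybad
  have hbad_lt : rG ybad < rG ystar := by linarith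
  have hmin : ∀ y, rG ybad ≤ rG y := fun y ↦ by
    obtain rfl | rfl | hy := hcover y
    exacts [hbad_lt.le, by linarith, (hr4 y hy).ge]
  have hproxy := proxyReward_eq_bad hybad hcover hr4 hrPeq hrPmed
  have hΔ : Δ1 + Δ2 = rG ystar - rG ybad := by rw [hΔ1, hΔ2]; ring
  have htime : (Δ1 + Δ2) / ε ^ 2
      ≤ (rG ystar + 1) ^ 2 / (ε ^ 2 * (rP ystar - expReward φ rP (θt 0))) := by
    rw [hΔ, ← hstar]
    exact gap_div_sq_le_sq_div φ (θt 0) hproxy (hstar ▸ hbad_lt)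
      (by linarith [(hrG ybad).1]) hε.1
  exact fun t ht ↦ fast_opt_orthonormal_general φ ystar (horth.1 ystar)
    (fun y hy ↦ (horth.2 hy.symm).le) rG rP (rG ybad) hbad_lt hmin hproxy hstar (Δ1 + Δ2) hΔ θt
    hflow ε hε.1 t ((mul_le_mul_of_nonneg_right htime
      (inv_nonneg.2 (policy_pos φ (θt 0) ystar).le)).trans ht)
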